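/- arXiv:2211.14364 — 5 statements merged into one kernel-verified Lean document; each statement's English description precedes it below -/
import Mathlib

section
/- Let α : ℝ → ℝ be an extended class K function, i.e., continuous, strictly increasing, with α(0) = 0. Let H : ℝ → ℝ be differentiable with H(0) ≥ 0 and H'(t) ≥ -α(H(t)) for all t ≥ 0. Then H(t) ≥ 0 for all t ≥ 0. -/
theorem stmt_2 (α : ℝ → ℝ) (hαcont : Continuous α) (hαmono : StrictMono α)
    (hα0 : α 0 = 0)
    (H : ℝ → ℝ) (hdiff : Differentiable ℝ H) (h0 : H 0 ≥ 0)
    (hderiv : ∀ t : ℝ, 0 ≤ t → deriv H t ≥ -α (H t)) :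
    ∀ t : ℝ, 0 ≤ t → H t ≥ 0 := by
  intro t ht
  have key : ∀ ε : ℝ, 0 < ε → -H t ≤ 0 + ε := by
    intro ε hε
    have := image_le_of_deriv_right_lt_deriv_boundary (f := fun x => -H x)
      (f' := fun x => -deriv H x) (a := 0) (b := t) (B := fun _ => ε) (B' := fun _ => 0)
      (hdiff.continuous.neg.continuousOn)
      (fun x _ => (hdiff x).hasDerivAt.neg.hasDerivWithinAt)
      (by show -H 0 ≤ ε; linarith)
      (fun x => hasDerivAt_const x ε)
      (by
        intro x hx hxe
        have hxe' : H x = -ε := by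
          have : -H x = ε := hxe
          linarith
        have h1 := hderiv x hx.1
        have h2 : α (H x) < α 0 := hαmono (by linarith)
        show -deriv H x < 0
        linarith)
      (x := t) ⟨ht, le_refl t⟩
    have h3 : -H t ≤ ε := this
    linarith
  have := le_of_forall_pos_le_add key
  linarith
end

section
/- (Theorem 1, trajectory form.) Let h : ℝⁿ → ℝ be Lipschitz continuous with Lipschitz constant γ ≥ 0, let α : ℝ → ℝ be an extended class K function, and let M : ℝ → ℝ be differentiable. Let x, x̂ : ℝ → ℝⁿ be functions such that the map t ↦ h(x̂(t)) is differentiable, ‖x(t) - x̂(t)‖ ≤ M(t) for all t ≥ 0, and for all t ≥ 0 the derivative of t ↦ h(x̂(t)) is at least -α(h(x̂(t)) - γ·M(t)) + γ·M'(t). If h(x̂(0)) - γ·M(0) ≥ 0, then h(x(t)) ≥ 0 for all t ≥ 0. -/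
theorem stmt_3 {n : ℕ} (h : EuclideanSpace ℝ (Fin n) → ℝ) (γ : ℝ) (hγ : 0 ≤ γ)
    (hlip : LipschitzWith γ.toNNReal h)
    (α : ℝ → ℝ) (hαcont : Continuous α) (hαmono : StrictMono α) (hα0 : α 0 = 0)
    (M : ℝ → ℝ) (hM : Differentiable ℝ M)
    (x xhat : ℝ → EuclideanSpace ℝ (Fin n))
    (hhdiff : Differentiable ℝ (fun t => h (xhat t)))
    (herr : ∀ t : ℝ, 0 ≤ t → ‖x t - xhat t‖ ≤ M t)
    (hcbf : ∀ t : ℝ, 0 ≤ t →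
      deriv (fun s => h (xhat s)) t ≥ -α (h (xhat t) - γ * M t) + γ * deriv M t)
    (h0 : h (xhat 0) - γ * M 0 ≥ 0) :
    ∀ t : ℝ, 0 ≤ t → h (x t) ≥ 0 := by
  have hg : ∀ t, HasDerivAt (fun s => -(h (xhat s) - γ * M s))
      (-(deriv (fun s => h (xhat s)) t - γ * deriv M t)) t := fun t =>
    (((hhdiff t).hasDerivAt).sub (((hM t).hasDerivAt).const_mul γ)).neg
  intro t ht
  have key : 0 ≤ h (xhat t) - γ * M t := by
    by_contra hneg
    push Not at hneg
    set ε := -(h (xhat t) - γ * M t) / 2 with hε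
    have hεpos : 0 < ε := by rw [hε]; linarith
    have := image_le_of_deriv_right_lt_deriv_boundary (a := 0) (b := t)
      (f := fun s => -(h (xhat s) - γ * M s))
      (f' := fun t => -(deriv (fun s => h (xhat s)) t - γ * deriv M t))
      (B := fun _ => ε) (B' := fun _ => 0)
      (fun s _ => (hg s).continuousAt.continuousWithinAt)
      (fun s _ => (hg s).hasDerivWithinAt) (by linarith)
      (fun s => hasDerivAt_const s ε)
      (by
        intro s hs he
        have h1 := hcbf s hs.1
        have h2 : α (h (xhat s) - γ * M s) < α 0 := hαmono (by linarith)
        linarith)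
      (Set.right_mem_Icc.2 ht)
    linarith
  have h1 := hlip.dist_le_mul (x t) (xhat t)
  rw [Real.coe_toNNReal γ hγ, Real.dist_eq, dist_eq_norm] at h1
  have h2 := mul_le_mul_of_nonneg_left (herr t ht) hγ
  have h3 := neg_abs_le (h (x t) - h (xhat t))
  linarith
end

section
/- (Theorem 2, trajectory form.) Let h : ℝⁿ → ℝ be differentiable, let α : ℝ → ℝ be an extended class K function, let κ : ℝ → ℝ be nonincreasing with κ(0) = 1, and let d̄ ≥ 0. Let x : ℝ → ℝⁿ be differentiable, let F : ℝ → ℝⁿ, let G : ℝ → (ℝ^{n_d} →L[ℝ] ℝⁿ) assign a continuous linear map to each time, and let w : ℝ → ℝ^{n_d} satisfy ‖w(t)‖ ≤ d̄ for all t. Suppose that for all t ≥ 0: (i) x'(t) = F(t) + G(t)(w(t)); and (ii) ⟨∇h(x(t)), F(t)⟩ - κ(h(x(t)))·‖(G(t))†(∇h(x(t)))‖·d̄ ≥ -α(h(x(t))), where (G(t))† denotes the adjoint of G(t). If h(x(0)) ≥ 0, then h(x(t)) ≥ 0 for all t ≥ 0. -/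
open scoped RealInnerProductSpace

theorem stmt_6 {n nd : ℕ} (h : EuclideanSpace ℝ (Fin n) → ℝ)
    (hdiff : Differentiable ℝ h)
    (α : ℝ → ℝ) (hαcont : Continuous α) (hαmono : StrictMono α) (hα0 : α 0 = 0)
    (κ : ℝ → ℝ) (hκ : Antitone κ) (hκ0 : κ 0 = 1)
    (dbar : ℝ) (hdbar : 0 ≤ dbar)
    (x : ℝ → EuclideanSpace ℝ (Fin n)) (hx : Differentiable ℝ x)
    (F : ℝ → EuclideanSpace ℝ (Fin n))
    (G : ℝ → (EuclideanSpace ℝ (Fin nd) →L[ℝ] EuclideanSpace ℝ (Fin n)))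
    (w : ℝ → EuclideanSpace ℝ (Fin nd)) (hw : ∀ t : ℝ, ‖w t‖ ≤ dbar)
    (hdyn : ∀ t : ℝ, 0 ≤ t → deriv x t = F t + (G t) (w t))
    (hcbf : ∀ t : ℝ, 0 ≤ t →
      ⟪gradient h (x t), F t⟫
        - κ (h (x t)) * ‖(ContinuousLinearMap.adjoint (G t)) (gradient h (x t))‖ * dbar
        ≥ -α (h (x t)))
    (h0 : h (x 0) ≥ 0) :
    ∀ t : ℝ, 0 ≤ t → h (x t) ≥ 0 := by
  have hy : ∀ t, HasDerivAt (fun t => h (x t)) ⟪gradient h (x t), deriv x t⟫ t := by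
    intro t
    have h1 := (hdiff (x t)).hasGradientAt.hasFDerivAt.comp_hasDerivAt t (hx t).hasDerivAt
    exact h1
  have hpos : ∀ t, 0 ≤ t → h (x t) < 0 → 0 < ⟪gradient h (x t), deriv x t⟫ := by
    intro t ht hneg
    have hc := hcbf t ht
    have hα : α (h (x t)) < 0 := by
      have := hαmono hneg
      rwa [hα0] at this
    have hk : 1 ≤ κ (h (x t)) := by
      have := hκ hneg.le
      rwa [hκ0] at this
    rw [hdyn t ht, inner_add_right, ← ContinuousLinearMap.adjoint_inner_left]
    set v := (ContinuousLinearMap.adjoint (G t)) (gradient h (x t))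
    have h2 : -(‖v‖ * ‖w t‖) ≤ ⟪v, w t⟫ := (abs_le.mp (abs_real_inner_le_norm v (w t))).1
    have h3 : ‖v‖ * ‖w t‖ ≤ ‖v‖ * dbar := mul_le_mul_of_nonneg_left (hw t) (norm_nonneg v)
    have h4 : 0 ≤ ‖v‖ * dbar := mul_nonneg (norm_nonneg v) hdbar
    nlinarith [mul_nonneg (sub_nonneg.mpr hk) h4]
  have hcont : Continuous (fun t => h (x t)) := hdiff.continuous.comp hx.continuous
  intro T hT
  by_contra hlt
  have hlt : h (x T) < 0 := not_le.mp hlt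
  have hcomp : IsCompact (Set.Icc 0 T ∩ {t | 0 ≤ h (x t)}) :=
    isCompact_Icc.inter_right (isClosed_le continuous_const hcont)
  obtain ⟨s, ⟨⟨hs0, hsT⟩, hs⟩, hmax⟩ := hcomp.exists_isGreatest ⟨0, ⟨le_refl 0, hT⟩, h0⟩
  have hs : 0 ≤ h (x s) := hs
  have hsT' : s < T := by
    rcases hsT.lt_or_eq with h5 | h5
    · exact h5
    · rw [h5] at hs
      linarith
  obtain ⟨c, ⟨hc1, hc2⟩, hc⟩ := exists_hasDerivAt_eq_slope (fun t => h (x t)) _ hsT'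
    hcont.continuousOn (fun t _ => hy t)
  have hcneg : h (x c) < 0 := by
    by_contra hcc
    have := hmax ⟨⟨hs0.trans hc1.le, hc2.le⟩, not_lt.mp hcc⟩
    linarith
  have h6 := hpos c (hs0.trans hc1.le) hcneg
  have h7 : (h (x T) - h (x s)) / (T - s) < 0 :=
    div_neg_of_neg_of_pos (by linarith) (by linarith)
  linarith
end

section
/- Let m be a natural number, a ∈ ℝ, and b⁻, b⁺ : Fin m → ℝ. Suppose there exists an index i such that b⁻ᵢ·b⁺ᵢ > 0 (i.e., b⁻ᵢ and b⁺ᵢ are both nonzero and have the same sign). Then the set K = { u ∈ ℝᵐ : a + ∑ⱼ min(b⁻ⱼ·uⱼ, b⁺ⱼ·uⱼ) ≥ 0 } is nonempty. -/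
theorem stmt_9 (m : ℕ) (a : ℝ) (bm bp : Fin m → ℝ)
    (hsign : ∃ i : Fin m, bm i * bp i > 0) :
    Set.Nonempty {u : EuclideanSpace ℝ (Fin m) | a + ∑ j, min (bm j * u j) (bp j * u j) ≥ 0} := by
  obtain ⟨i, hi⟩ := hsign
  have key : ∃ t : ℝ, |a| ≤ bm i * t ∧ |a| ≤ bp i * t := by
    have h1 : bm i ≠ 0 := left_ne_zero_of_mul hi.ne'
    have h2 : bp i ≠ 0 := right_ne_zero_of_mul hi.ne'
    have ha := abs_nonneg a
    refine ⟨|a| * (bm i + bp i) / (bm i * bp i), ?_, ?_⟩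
    · rw [← mul_div_assoc, le_div_iff₀ hi]
      nlinarith [mul_nonneg ha (sq_nonneg (bm i))]
    · rw [← mul_div_assoc, le_div_iff₀ hi]
      nlinarith [mul_nonneg ha (sq_nonneg (bp i))]
  obtain ⟨t, h1, h2⟩ := key
  refine ⟨WithLp.toLp 2 (Pi.single i t), ?_⟩
  simp only [Set.mem_setOf_eq]
  rw [Finset.sum_eq_single i]
  · simp only [Pi.single_eq_same]
    have := le_min h1 h2
    linarith [neg_abs_le a]
  · intro j _ hj
    simp [Pi.single_eq_of_ne hj]
  · simp
end

section
/- Let P, A ∈ ℝⁿˣⁿ and C ∈ ℝᵖˣⁿ with P symmetric positive definite, let θ > 0, and suppose P·A + Aᵀ·P - Cᵀ·C = -2θ·P. Set L = (1/2)·P⁻¹·Cᵀ. Let e : ℝ → ℝⁿ be differentiable with e'(t) = (A - L·C)·e(t) for all t. Then for all t ≥ 0, ‖e(t)‖ ≤ √(λ_max(P)/λ_min(P)) · ‖e(0)‖ · exp(-θ·t), where λ_max(P) and λ_min(P) denote the largest and smallest eigenvalues of P. -/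
open Matrix

lemma aux_quad {n : ℕ} (M : Matrix (Fin n) (Fin n) ℝ) (hM : M.IsHermitian)
    (x : EuclideanSpace ℝ (Fin n)) :
    inner ℝ x (Matrix.toEuclideanLin M x)
      = ∑ i, hM.eigenvalues i * (inner ℝ (hM.eigenvectorBasis i) x) ^ 2 := by
  rw [← hM.eigenvectorBasis.sum_inner_mul_inner x]
  refine Finset.sum_congr rfl fun i _ => ?_
  have hs := Matrix.isSymmetric_toEuclideanLin_iff.2 hM
  have h1 : Matrix.toEuclideanLin M (hM.eigenvectorBasis i)
      = hM.eigenvalues i • hM.eigenvectorBasis i := by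
    have := hM.mulVec_eigenvectorBasis i
    ext j
    simpa [Matrix.toLpLin_apply] using congrFun this j
  rw [← hs (hM.eigenvectorBasis i) x, h1, inner_smul_left, real_inner_comm]
  simp
  ring

lemma aux_norm {n : ℕ} (M : Matrix (Fin n) (Fin n) ℝ) (hM : M.IsHermitian)
    (x : EuclideanSpace ℝ (Fin n)) :
    ‖x‖ ^ 2 = ∑ i, (inner ℝ (hM.eigenvectorBasis i) x) ^ 2 := by
  rw [← real_inner_self_eq_norm_sq, ← hM.eigenvectorBasis.sum_inner_mul_inner x]
  refine Finset.sum_congr rfl fun i _ => ?_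
  rw [real_inner_comm, sq]

lemma aux_inner {n : ℕ} (M N : Matrix (Fin n) (Fin n) ℝ) (x : EuclideanSpace ℝ (Fin n)) :
    inner ℝ (Matrix.toEuclideanLin N x) (Matrix.toEuclideanLin M x)
      = x.ofLp ⬝ᵥ (Nᵀ * M) *ᵥ x.ofLp := by
  rw [EuclideanSpace.inner_eq_star_dotProduct]
  simp only [Matrix.toLpLin_apply, star_trivial]
  rw [← Matrix.mulVec_mulVec, Matrix.dotProduct_mulVec x.ofLp, Matrix.vecMul_transpose,
    dotProduct_comm]

lemma aux_inner' {n : ℕ} (M : Matrix (Fin n) (Fin n) ℝ) (x : EuclideanSpace ℝ (Fin n)) :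
    inner ℝ x (Matrix.toEuclideanLin M x) = x.ofLp ⬝ᵥ M *ᵥ x.ofLp := by
  rw [EuclideanSpace.inner_eq_star_dotProduct]
  simp only [Matrix.toLpLin_apply, star_trivial]
  rw [dotProduct_comm]

theorem stmt_13 {n p : ℕ} (P A : Matrix (Fin n) (Fin n) ℝ) (C : Matrix (Fin p) (Fin n) ℝ)
    (hP : P.PosDef)
    (θ : ℝ) (hθ : 0 < θ)
    (hlyap : P * A + Aᵀ * P - Cᵀ * C = (-2 * θ) • P)
    (L : Matrix (Fin n) (Fin p) ℝ) (hL : L = (1/2 : ℝ) • (P⁻¹ * Cᵀ))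
    (e : ℝ → EuclideanSpace ℝ (Fin n)) (hediff : Differentiable ℝ e)
    (hdyn : ∀ t : ℝ, deriv e t = Matrix.toEuclideanLin (A - L * C) (e t)) :
    ∀ t : ℝ, 0 ≤ t →
      ‖e t‖ ≤ Real.sqrt ((⨆ i, hP.isHermitian.eigenvalues i) / (⨅ i, hP.isHermitian.eigenvalues i))
        * ‖e 0‖ * Real.exp (-θ * t) := by
  intro t _
  rcases isEmpty_or_nonempty (Fin n) with hn | hn
  · have : e t = 0 := Subsingleton.elim _ _
    rw [this, norm_zero]
    positivity
  have hPt : Pᵀ = P := by simpa using hP.isHermitian.eq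
  have hPu : IsUnit P.det := (Matrix.isUnit_iff_isUnit_det P).1 hP.isUnit
  have hPL : P * (L * C) = (1/2 : ℝ) • (Cᵀ * C) := by
    rw [hL, Matrix.smul_mul, Matrix.mul_smul, Matrix.mul_assoc,
      Matrix.mul_nonsing_inv_cancel_left _ _ hPu]
  have hLP : (L * C)ᵀ * P = (1/2 : ℝ) • (Cᵀ * C) := by
    have := congrArg Matrix.transpose hPL
    simpa [Matrix.transpose_mul, hPt, Matrix.mul_assoc] using this
  have hmat : P * (A - L * C) + (A - L * C)ᵀ * P = (-2 * θ) • P := by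
    rw [← hlyap, Matrix.mul_sub, Matrix.transpose_sub, Matrix.sub_mul, hPL, hLP]
    module
  set T := Matrix.toEuclideanLin P with hT
  let V : ℝ → ℝ := fun s => inner ℝ (e s) (T (e s))
  have hV : ∀ s, HasDerivAt V (-2 * θ * V s) s := by
    intro s
    have he : HasDerivAt e (Matrix.toEuclideanLin (A - L * C) (e s)) s := by
      rw [← hdyn]; exact (hediff s).hasDerivAt
    have hTe := (LinearMap.toContinuousLinearMap T).hasFDerivAt.comp_hasDerivAt s he
    have h := he.inner ℝ hTe
    refine h.congr_deriv ?_
    have h2 : T (Matrix.toEuclideanLin (A - L * C) (e s))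
        = Matrix.toEuclideanLin (P * (A - L * C)) (e s) := by
      simp [hT, Matrix.toLpLin_apply, Matrix.mulVec_mulVec]
    simp only [LinearMap.coe_toContinuousLinearMap', Function.comp, V]
    rw [h2, hT, aux_inner, aux_inner', aux_inner', ← dotProduct_add, ← Matrix.add_mulVec, hmat,
      Matrix.smul_mulVec, dotProduct_smul, smul_eq_mul]
  have hconst : V t * Real.exp (2 * θ * t) = V 0 := by
    have hd : ∀ s, HasDerivAt (fun s => V s * Real.exp (2 * θ * s)) 0 s := by
      intro s
      have h1 : HasDerivAt (fun s : ℝ => Real.exp (2 * θ * s))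
          (Real.exp (2 * θ * s) * (2 * θ * 1)) s := ((hasDerivAt_id s).const_mul (2 * θ)).exp
      refine ((hV s).mul h1).congr_deriv ?_
      ring
    have := is_const_of_deriv_eq_zero (fun s => (hd s).differentiableAt) (fun s => (hd s).deriv) t 0
    simpa using this
  set lM := ⨆ i, hP.isHermitian.eigenvalues i with hlM
  set lm := ⨅ i, hP.isHermitian.eigenvalues i with hlm
  have hfin := Set.finite_range hP.isHermitian.eigenvalues
  have hlmpos : 0 < lm := by
    obtain ⟨i, hi⟩ := exists_eq_ciInf_of_finite (f := hP.isHermitian.eigenvalues)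
    rw [hlm, ← hi]; exact hP.eigenvalues_pos i
  have hup : V 0 ≤ lM * ‖e 0‖ ^ 2 := by
    simp only [V, hT]
    rw [aux_quad P hP.isHermitian, aux_norm P hP.isHermitian, Finset.mul_sum]
    exact Finset.sum_le_sum fun i _ => mul_le_mul_of_nonneg_right
      (le_ciSup hfin.bddAbove i) (sq_nonneg _)
  have hlo : lm * ‖e t‖ ^ 2 ≤ V t := by
    simp only [V, hT]
    rw [aux_quad P hP.isHermitian, aux_norm P hP.isHermitian, Finset.mul_sum]
    exact Finset.sum_le_sum fun i _ => mul_le_mul_of_nonneg_right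
      (ciInf_le hfin.bddBelow i) (sq_nonneg _)
  have hlMm : lm ≤ lM := by
    obtain ⟨i⟩ := hn
    exact (ciInf_le hfin.bddBelow i).trans (le_ciSup hfin.bddAbove i)
  refine (sq_le_sq₀ (norm_nonneg _) (by positivity)).1 ?_
  rw [mul_pow, mul_pow, Real.sq_sqrt (div_nonneg (hlmpos.le.trans hlMm) hlmpos.le)]
  have hexp : Real.exp (-θ * t) ^ 2 * Real.exp (2 * θ * t) = 1 := by
    rw [sq, ← Real.exp_add, ← Real.exp_add, Real.exp_eq_one_iff]; ring
  have hVt : V t = V 0 * Real.exp (-θ * t) ^ 2 := by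
    rw [← hconst, mul_assoc, mul_comm (Real.exp (2 * θ * t)), hexp, mul_one]
  have : lm * ‖e t‖ ^ 2 ≤ lM * ‖e 0‖ ^ 2 * Real.exp (-θ * t) ^ 2 :=
    hlo.trans (hVt.le.trans (mul_le_mul_of_nonneg_right hup (sq_nonneg _)))
  rw [div_mul_eq_mul_div, div_mul_eq_mul_div, le_div_iff₀ hlmpos]
  linarith
end
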